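/- The linear map a² : V → V is locally nilpotent (for each v ∈ V there is N with (a²)^N v = 0), so E := Σ_{k=0}^∞ (1/(4^k · k!)) · (a²)^k is a well-defined linear endomorphism of V (on each vector only finitely many terms are nonzero). This map satisfies E ∘ a† = (a† + (1/2)·a) ∘ E and E ∘ a = a ∘ E. -/

import Mathlib

open Complex MvPolynomial Finset

noncomputable section

/-- The standard basis vector `e n` of `V = ℕ →₀ ℂ`. -/
def e (n : ℕ) : ℕ →₀ ℂ := Finsupp.single n 1

/-- The destruction operator `a`: `a (e 0) = 0`, `a (e (n+1)) = √(n+1) • e n`. -/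
def aop : (ℕ →₀ ℂ) →ₗ[ℂ] (ℕ →₀ ℂ) :=
  Finsupp.lsum ℂ fun n => match n with
    | 0 => 0
    | k + 1 => ((Real.sqrt (k + 1) : ℝ) : ℂ) • Finsupp.lsingle k

/-- The creation operator `a†`: `a† (e n) = √(n+1) • e (n+1)`. -/
def adop : (ℕ →₀ ℂ) →ₗ[ℂ] (ℕ →₀ ℂ) :=
  Finsupp.lsum ℂ fun n => ((Real.sqrt (n + 1) : ℝ) : ℂ) • Finsupp.lsingle (n + 1)

/-!
For a locally nilpotent `T` and a power series `f`, the sum `f(T)` is finite on every vector.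
If `c = T b - b T` commutes with `T`, the Leibniz rule gives `T ^ k b = b T ^ k + k c T ^ (k - 1)`,
hence `f(T) b = b f(T) + c f'(T)`. With `T = a²`, `b = a†` the canonical commutation relation
`a a† = a† a + 1` yields `c = 2 a`, and `f = exp (X / 4)` satisfies `f' = f / 4`, so that
`E = f(a²)` obeys `E a† = a† E + (1 / 2) a E`. The choice `b = a`, `c = 0` gives `E a = a E`.
-/

section Commutator

variable {A : Type*} [Semiring A] {t b c : A}

lemma pow_succ_mul_of_mul_eq_add (h : t * b = b * t + c) (hc : Commute t c) (k : ℕ) :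
    t ^ (k + 1) * b = b * t ^ (k + 1) + (k + 1) • (c * t ^ k) := by
  induction k with
  | zero => simpa using h
  | succ k ih =>
    calc t ^ (k + 1 + 1) * b
        = t * (t ^ (k + 1) * b) := by rw [pow_succ', mul_assoc]
      _ = t * b * t ^ (k + 1) + (k + 1) • (t * c * t ^ k) := by
        rw [ih, mul_add, mul_smul_comm, mul_assoc, mul_assoc]
      _ = b * t ^ (k + 1 + 1) + (c * t ^ (k + 1) + (k + 1) • (c * t ^ (k + 1))) := by
        rw [h, hc.eq, add_mul, mul_assoc b, mul_assoc c, ← pow_succ', ← pow_succ', add_assoc]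
      _ = b * t ^ (k + 1 + 1) + (k + 1 + 1) • (c * t ^ (k + 1)) := by rw [← succ_nsmul']

end Commutator

section PowerSeries

lemma derivative_rescale {R : Type*} [CommSemiring R] (r : R) (f : PowerSeries R) :
    PowerSeries.derivative R (PowerSeries.rescale r f) =
      r • PowerSeries.rescale r (PowerSeries.derivative R f) := by
  ext n
  simp only [PowerSeries.coeff_derivative, PowerSeries.coeff_rescale, PowerSeries.coeff_smul,
    smul_eq_mul]
  ring

lemma derivative_rescale_exp {R : Type*} [CommRing R] [Algebra ℚ R] (r : R) :
    PowerSeries.derivative R (PowerSeries.rescale r (PowerSeries.exp R)) =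
      r • PowerSeries.rescale r (PowerSeries.exp R) := by
  rw [derivative_rescale, PowerSeries.derivative_exp]

lemma coeff_rescale_one_div_exp {K : Type*} [Field K] [Algebra ℚ K] (r : K) (k : ℕ) :
    PowerSeries.coeff k (PowerSeries.rescale (1 / r) (PowerSeries.exp K)) =
      1 / (r ^ k * (k.factorial : K)) := by
  simp [PowerSeries.coeff_rescale, PowerSeries.coeff_exp, mul_comm]

end PowerSeries

section LocallyNilpotent

variable {R M : Type*}

/-- An endomorphism is locally nilpotent if every vector is killed by one of its powers, which may
depend on the vector. -/
def IsLocallyNilpotent [Semiring R] [AddCommMonoid M] [Module R M] (T : Module.End R M) : Prop :=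
  ∀ v : M, ∃ N : ℕ, (T ^ N) v = 0

lemma support_coeff_smul_pow_subset [Semiring R] [AddCommMonoid M] [Module R M]
    {T : Module.End R M} (f : PowerSeries R) {v : M} {N : ℕ} (hv : (T ^ N) v = 0) :
    (Function.support fun k => PowerSeries.coeff k f • (T ^ k) v) ⊆ Finset.range N := by
  intro k hk
  by_contra hkN
  have hNk : N ≤ k := by simpa using hkN
  exact hk (by simp only [Module.End.pow_map_zero_of_le hNk hv, smul_zero])

namespace IsLocallyNilpotent

section Semiring

variable [Semiring R] [AddCommMonoid M] [Module R M] {T : Module.End R M}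

lemma pow (hT : IsLocallyNilpotent T) {n : ℕ} (hn : n ≠ 0) : IsLocallyNilpotent (T ^ n) := by
  intro v
  obtain ⟨N, hN⟩ := hT v
  refine ⟨N, ?_⟩
  rw [← pow_mul]
  exact Module.End.pow_map_zero_of_le (Nat.le_mul_of_pos_left N (Nat.pos_of_ne_zero hn)) hN

lemma of_span_eq_top {s : Set M} (hs : Submodule.span R s = ⊤)
    (h : ∀ v ∈ s, ∃ N : ℕ, (T ^ N) v = 0) : IsLocallyNilpotent T := by
  intro v
  have hv : v ∈ Submodule.span R s := hs ▸ Submodule.mem_top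
  induction hv using Submodule.span_induction with
  | mem v hv => exact h v hv
  | zero => exact ⟨0, map_zero _⟩
  | add v w _ _ hv hw =>
    obtain ⟨N, hN⟩ := hv
    obtain ⟨K, hK⟩ := hw
    refine ⟨max N K, ?_⟩
    rw [map_add, Module.End.pow_map_zero_of_le (le_max_left N K) hN,
      Module.End.pow_map_zero_of_le (le_max_right N K) hK, add_zero]
  | smul r v _ hv =>
    obtain ⟨N, hN⟩ := hv
    exact ⟨N, by rw [map_smul, hN, smul_zero]⟩

end Semiring

section CommSemiring

variable [CommSemiring R] [AddCommMonoid M] [Module R M] {T b c : Module.End R M}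

lemma hasFiniteSupport_coeff_smul_pow (hT : IsLocallyNilpotent T) (f : PowerSeries R) (v : M) :
    Function.HasFiniteSupport fun k => PowerSeries.coeff k f • (T ^ k) v :=
  have ⟨_, hN⟩ := hT v
  (Finset.finite_toSet _).subset (support_coeff_smul_pow_subset f hN)

/-- The endomorphism `f(T) = ∑ₖ fₖ Tᵏ` obtained by evaluating a power series `f` at a locally
nilpotent endomorphism `T`. Local nilpotency makes the support of `k ↦ fₖ Tᵏ v` finite for each
`v`, so the `finsum` below never takes its junk value. -/
def evalPowerSeries (hT : IsLocallyNilpotent T) (f : PowerSeries R) : Module.End R M where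
  toFun v := ∑ᶠ k, PowerSeries.coeff k f • (T ^ k) v
  map_add' v w := by
    simp only [map_add, smul_add]
    exact finsum_add_distrib (hT.hasFiniteSupport_coeff_smul_pow f v)
      (hT.hasFiniteSupport_coeff_smul_pow f w)
  map_smul' r v := by
    simp only [map_smul, RingHom.id_apply, smul_comm _ r]
    exact (smul_finsum' r (hT.hasFiniteSupport_coeff_smul_pow f v)).symm

lemma evalPowerSeries_apply_eq_sum (hT : IsLocallyNilpotent T) (f : PowerSeries R) {v : M} {N : ℕ}
    (hv : (T ^ N) v = 0) :
    hT.evalPowerSeries f v = ∑ k ∈ Finset.range N, PowerSeries.coeff k f • (T ^ k) v :=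
  finsum_eq_sum_of_support_subset _ (support_coeff_smul_pow_subset f hv)

lemma evalPowerSeries_smul (hT : IsLocallyNilpotent T) (r : R) (f : PowerSeries R) :
    hT.evalPowerSeries (r • f) = r • hT.evalPowerSeries f := by
  ext v
  obtain ⟨N, hN⟩ := hT v
  simp only [LinearMap.smul_apply, hT.evalPowerSeries_apply_eq_sum _ hN, PowerSeries.coeff_smul,
    smul_assoc, Finset.smul_sum]

lemma evalPowerSeries_mul_of_mul_eq_add (hT : IsLocallyNilpotent T) (h : T * b = b * T + c)
    (hc : Commute T c) (f : PowerSeries R) :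
    hT.evalPowerSeries f * b =
      b * hT.evalPowerSeries f + c * hT.evalPowerSeries (PowerSeries.derivative R f) := by
  ext v
  obtain ⟨N, hN⟩ := hT v
  have hN' : (T ^ (N + 1)) v = 0 := Module.End.pow_map_zero_of_le N.le_succ hN
  have leibniz (k : ℕ) :
      (T ^ (k + 1)) (b v) = b ((T ^ (k + 1)) v) + (k + 1) • c ((T ^ k) v) :=
    LinearMap.congr_fun (pow_succ_mul_of_mul_eq_add h hc k) v
  have hbN : (T ^ (N + 1)) (b v) = 0 := by
    rw [leibniz, hN, hN', map_zero, map_zero, smul_zero, add_zero]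
  have derivative_term (k : ℕ) :
      PowerSeries.coeff (k + 1) f • (k + 1) • c ((T ^ k) v) =
        PowerSeries.coeff k (PowerSeries.derivative R f) • c ((T ^ k) v) := by
    rw [PowerSeries.coeff_derivative, ← Nat.cast_smul_eq_nsmul R, smul_smul, Nat.cast_succ]
  calc hT.evalPowerSeries f (b v)
      = ∑ k ∈ Finset.range N, PowerSeries.coeff (k + 1) f • (T ^ (k + 1)) (b v) +
          PowerSeries.coeff 0 f • b v := by
        rw [hT.evalPowerSeries_apply_eq_sum f hbN, Finset.sum_range_succ', pow_zero,
          Module.End.one_apply]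
    _ = b (∑ k ∈ Finset.range N, PowerSeries.coeff (k + 1) f • (T ^ (k + 1)) v +
            PowerSeries.coeff 0 f • v) +
          c (∑ k ∈ Finset.range N,
            PowerSeries.coeff k (PowerSeries.derivative R f) • (T ^ k) v) := by
        simp only [leibniz, smul_add, derivative_term, Finset.sum_add_distrib, map_add, map_sum,
          map_smul]
        exact add_right_comm _ _ _
    _ = b (hT.evalPowerSeries f v) +
          c (hT.evalPowerSeries (PowerSeries.derivative R f) v) := by
        rw [hT.evalPowerSeries_apply_eq_sum f hN', hT.evalPowerSeries_apply_eq_sum _ hN,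
          Finset.sum_range_succ', pow_zero, Module.End.one_apply]

lemma commute_evalPowerSeries (hT : IsLocallyNilpotent T) (hb : Commute T b)
    (f : PowerSeries R) : Commute (hT.evalPowerSeries f) b := by
  have h : T * b = b * T + 0 := by rw [hb.eq, add_zero]
  have := hT.evalPowerSeries_mul_of_mul_eq_add h (Commute.zero_right T) f
  rwa [zero_mul, add_zero] at this

end CommSemiring

lemma evalPowerSeries_rescale_exp_mul [CommRing R] [Algebra ℚ R]
    [AddCommMonoid M] [Module R M] {T b c : Module.End R M} (hT : IsLocallyNilpotent T)
    (h : T * b = b * T + c) (hc : Commute T c) (r : R) :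
    hT.evalPowerSeries (PowerSeries.rescale r (PowerSeries.exp R)) * b =
      (b + r • c) * hT.evalPowerSeries (PowerSeries.rescale r (PowerSeries.exp R)) := by
  rw [hT.evalPowerSeries_mul_of_mul_eq_add h hc, derivative_rescale_exp, hT.evalPowerSeries_smul,
    add_mul, mul_smul_comm, smul_mul_assoc]

end IsLocallyNilpotent

end LocallyNilpotent

section LadderOperators

lemma span_range_e : Submodule.span ℂ (Set.range e) = ⊤ := by
  rw [← Finsupp.basisSingleOne.span_eq, Finsupp.coe_basisSingleOne]
  rfl

lemma aop_e_zero : aop (e 0) = 0 := by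
  simp [aop, e]

lemma aop_e_succ (n : ℕ) : aop (e (n + 1)) = ((Real.sqrt (n + 1) : ℝ) : ℂ) • e n := by
  simp [aop, e]

lemma adop_e (n : ℕ) : adop (e n) = ((Real.sqrt (n + 1) : ℝ) : ℂ) • e (n + 1) := by
  simp [adop, e]

lemma ofReal_sqrt_succ_mul_self (n : ℕ) :
    ((Real.sqrt (n + 1) : ℝ) : ℂ) * ((Real.sqrt (n + 1) : ℝ) : ℂ) = n + 1 := by
  rw [← Complex.ofReal_mul, Real.mul_self_sqrt (by positivity)]
  push_cast
  rfl

lemma aop_adop_e (n : ℕ) : aop (adop (e n)) = (n + 1 : ℂ) • e n := by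
  rw [adop_e, map_smul, aop_e_succ, smul_smul, ofReal_sqrt_succ_mul_self]

lemma adop_aop_e (n : ℕ) : adop (aop (e n)) = (n : ℂ) • e n := by
  cases n with
  | zero => rw [aop_e_zero, map_zero, Nat.cast_zero, zero_smul]
  | succ n => rw [aop_e_succ, map_smul, adop_e, smul_smul, ofReal_sqrt_succ_mul_self, Nat.cast_succ]

lemma aop_mul_adop :
    (aop : Module.End ℂ (ℕ →₀ ℂ)) * adop = (adop : Module.End ℂ (ℕ →₀ ℂ)) * aop + 1 := by
  refine LinearMap.ext_on_range span_range_e fun n => ?_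
  simp only [Module.End.mul_apply, LinearMap.add_apply, Module.End.one_apply, aop_adop_e,
    adop_aop_e, add_smul, one_smul]

lemma aop_sq_mul_adop :
    (aop : Module.End ℂ (ℕ →₀ ℂ)) ^ 2 * adop =
      (adop : Module.End ℂ (ℕ →₀ ℂ)) * aop ^ 2 + (2 : ℂ) • aop := by
  simpa [ofNat_smul_eq_nsmul] using
    pow_succ_mul_of_mul_eq_add aop_mul_adop (Commute.one_right aop) 1

lemma aop_pow_succ_e (n : ℕ) : ((aop : Module.End ℂ (ℕ →₀ ℂ)) ^ (n + 1)) (e n) = 0 := by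
  induction n with
  | zero => simpa using aop_e_zero
  | succ n ih => rw [pow_succ, Module.End.mul_apply, aop_e_succ, map_smul, ih, smul_zero]

lemma isLocallyNilpotent_aop : IsLocallyNilpotent aop :=
  .of_span_eq_top span_range_e (Set.forall_mem_range.2 fun n => ⟨n + 1, aop_pow_succ_e n⟩)

end LadderOperators

/-- `a²` is locally nilpotent, so `E = Σ_k (1/(4^k k!)) (a²)^k` is a well-defined
endomorphism of `V` (on each vector the series terminates), and `E ∘ a† = (a† + ½a) ∘ E`,
`E ∘ a = a ∘ E`. -/
theorem stmt7 :
    (∀ v : ℕ →₀ ℂ, ∃ N : ℕ, (((aop : Module.End ℂ (ℕ →₀ ℂ)) ^ 2) ^ N) v = 0) ∧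
    ∃ E : Module.End ℂ (ℕ →₀ ℂ),
      (∀ (v : ℕ →₀ ℂ) (N : ℕ), (((aop : Module.End ℂ (ℕ →₀ ℂ)) ^ 2) ^ N) v = 0 →
        E v = ∑ k ∈ Finset.range N,
          ((1 : ℂ) / (4 ^ k * (k.factorial : ℂ))) •
            ((((aop : Module.End ℂ (ℕ →₀ ℂ)) ^ 2) ^ k) v)) ∧
      E * (adop : Module.End ℂ (ℕ →₀ ℂ)) =
        ((adop : Module.End ℂ (ℕ →₀ ℂ)) + (1 / 2 : ℂ) • (aop : Module.End ℂ (ℕ →₀ ℂ))) * E ∧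
      E * (aop : Module.End ℂ (ℕ →₀ ℂ)) = (aop : Module.End ℂ (ℕ →₀ ℂ)) * E := by
  have h_nilp : IsLocallyNilpotent ((aop : Module.End ℂ (ℕ →₀ ℂ)) ^ 2) :=
    isLocallyNilpotent_aop.pow two_ne_zero
  have h_comm : Commute ((aop : Module.End ℂ (ℕ →₀ ℂ)) ^ 2) aop := (Commute.refl aop).pow_left 2
  refine ⟨h_nilp, h_nilp.evalPowerSeries (PowerSeries.rescale (1 / 4) (PowerSeries.exp ℂ)),
    fun v N hv => ?_, ?_, h_nilp.commute_evalPowerSeries h_comm _⟩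
  · simp only [h_nilp.evalPowerSeries_apply_eq_sum _ hv, coeff_rescale_one_div_exp]
  · have h_half : (1 / 4 : ℂ) • (2 : ℂ) • aop = (1 / 2 : ℂ) • aop := by
      rw [smul_smul]
      norm_num
    rw [h_nilp.evalPowerSeries_rescale_exp_mul aop_sq_mul_adop (h_comm.smul_right 2), h_half]

end
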